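/- Let Γ be a connected finite simplicial graph with at least two vertices that is not a join, let p : A_Γ → ℤ be a group homomorphism mapping every vertex of Γ to a nonzero integer, and let N = ker p. Then N is finitely generated and the distortion of N in A_Γ is quadratic, i.e. Dist_{A_Γ}^N ∼ n². -/

import Mathlib

/-- The word length of `g` with respect to a set `S` of letters. -/
noncomputable def wordLength {G : Type*} [Group G] (S : Set G) (g : G) : ℕ :=
  sInf {n | ∃ l : List G, l.length = n ∧ (∀ x ∈ l, x ∈ S ∨ x⁻¹ ∈ S) ∧ l.prod = g}

/-- The distortion function: `Dist(r) = max { |h|_T : h ∈ H, |h|_S ≤ r }`. -/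
noncomputable def distortion {G : Type*} [Group G] (S T : Set G) (H : Subgroup G)
    (r : ℕ) : ℕ :=
  sSup {n | ∃ h ∈ H, wordLength S h ≤ r ∧ wordLength T h = n}

/-- `f ⪯ g`. -/
def Dominated (f g : ℕ → ℕ) : Prop :=
  ∃ A B C D : ℕ, 0 < A ∧ 0 < B ∧ 0 < C ∧ ∀ x : ℕ, D < x → f x ≤ A * g (B * x) + C * x

/-- `f ∼ g`. -/
def FEquiv (f g : ℕ → ℕ) : Prop := Dominated f g ∧ Dominated g f

/-- The defining relators of the right-angled Artin group of a graph `Γ`. -/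
def raagRels {V : Type*} (Γ : SimpleGraph V) : Set (FreeGroup V) :=
  {r | ∃ u v : V, Γ.Adj u v ∧
    r = FreeGroup.of u * FreeGroup.of v * (FreeGroup.of u)⁻¹ * (FreeGroup.of v)⁻¹}

/-- The right-angled Artin group of a graph `Γ`. -/
abbrev RAAG {V : Type*} (Γ : SimpleGraph V) : Type _ := PresentedGroup (raagRels Γ)

/-- The standard generator of `RAAG Γ` associated to a vertex. -/
def raagGen {V : Type*} (Γ : SimpleGraph V) (v : V) : RAAG Γ := PresentedGroup.of v

/-- A graph is a join if its vertex set splits into two nonempty parts with every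
vertex of one part adjacent to every vertex of the other. -/
def IsJoin {α : Type*} (Γ : SimpleGraph α) : Prop :=
  ∃ V₁ V₂ : Set α, V₁.Nonempty ∧ V₂.Nonempty ∧ Disjoint V₁ V₂ ∧ V₁ ∪ V₂ = Set.univ ∧
    ∀ u ∈ V₁, ∀ v ∈ V₂, Γ.Adj u v

/-!
Upper bound. Powers `u v` of the generators can be chosen with a common nontrivial image under `p`.
Adjacent ones commute, so along a walk in `Γ` the element `u v ^ q * (u w ^ q)⁻¹` is a product of
`q`-th powers of elements of the kernel. The generator at `w` commutes with `u w`, so conjugating a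
kernel element of bounded length by `u v ^ q` costs only `O(|q|)`, and a word of length `r` in the
kernel is a product of `r` such conjugates with `|q| = O(r)`.

Lower bound. As `Γᶜ` is connected, there is a word, with consecutive letters at distinct
non-commuting vertices, that climbs to a height at least `n` under `p` and then returns to height
`0`. Such a word is rigid: no two letters can be exchanged, so a path in the Cayley graph from its
element to `1` has to remove its letters in order. A path that spells a word in generators of the
kernel stays at bounded height. When it leaves a prefix of height at least `k`, it thus carries at
least a multiple of `k` further letters; up to a constant these have been added since it left the
prefix one period longer, which takes a number of steps proportional to `k`. Summing over `k ≤ n`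
gives `n²`.
-/

open Filter
open scoped Pointwise

/-! ### Balls in word metrics -/

section WordBall

variable {G : Type*} [Group G] {S T : Set G} {g h : G} {m n : ℕ}

/-- The ball of radius `n` about `1` in the word metric of `S`. The identity is allowed as a letter,
so that the ball is the set of products of exactly `n` letters. -/
def wordBall (S : Set G) (n : ℕ) : Set G := insert 1 (S ∪ S⁻¹) ^ n

theorem wordBall_mono_right (hmn : m ≤ n) : wordBall S m ⊆ wordBall S n :=
  Set.pow_subset_pow_right (Set.mem_insert _ _) hmn

theorem one_mem_wordBall : (1 : G) ∈ wordBall S n :=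
  Set.one_mem_pow (Set.mem_insert _ _)

theorem subset_wordBall_one : S ⊆ wordBall S 1 := fun x hx => by
  simp [wordBall, hx]

theorem mul_mem_wordBall (hg : g ∈ wordBall S m) (hh : h ∈ wordBall S n) :
    g * h ∈ wordBall S (m + n) := by
  rw [wordBall, pow_add]
  exact Set.mul_mem_mul hg hh

theorem inv_mem_wordBall (hg : g ∈ wordBall S n) : g⁻¹ ∈ wordBall S n := by
  have letters_inv : (insert 1 (S ∪ S⁻¹))⁻¹ = insert 1 (S ∪ S⁻¹) := by
    rw [Set.inv_insert, inv_one, Set.union_inv, inv_inv, Set.union_comm]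
  rwa [wordBall, ← letters_inv, inv_pow, Set.inv_mem_inv]

theorem pow_mem_wordBall (hg : g ∈ wordBall S m) (n : ℕ) : g ^ n ∈ wordBall S (m * n) := by
  rw [wordBall, pow_mul]
  exact Set.pow_mem_pow hg

theorem zpow_mem_wordBall (hg : g ∈ wordBall S m) (k : ℤ) :
    g ^ k ∈ wordBall S (m * k.natAbs) := by
  rcases Int.natAbs_eq k with hk | hk
  · rw [hk, zpow_natCast, Int.natAbs_natCast]
    exact pow_mem_wordBall hg k.natAbs
  · rw [hk, zpow_neg, zpow_natCast, Int.natAbs_neg, Int.natAbs_natCast]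
    exact inv_mem_wordBall (pow_mem_wordBall hg k.natAbs)

theorem wordBall_subset_wordBall (hST : S ⊆ wordBall T m) (n : ℕ) :
    wordBall S n ⊆ wordBall T (m * n) := by
  rw [wordBall, wordBall, pow_mul]
  refine Set.pow_subset_pow_left (Set.insert_subset one_mem_wordBall (Set.union_subset hST ?_))
  exact fun x hx => inv_inv x ▸ inv_mem_wordBall (hST hx)

theorem wordBall_subset_closure : wordBall S n ⊆ Subgroup.closure S := by
  induction n with
  | zero => simp [wordBall]
  | succ n ih =>
    rw [wordBall, pow_succ]
    refine Set.mul_subset_iff.2 fun x hx y hy => mul_mem (ih hx) ?_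
    rcases hy with rfl | hy | hy
    · exact one_mem _
    · exact Subgroup.subset_closure hy
    · exact inv_mem_iff.1 (Subgroup.subset_closure hy)

theorem finite_wordBall (hS : S.Finite) (n : ℕ) : (wordBall S n).Finite := by
  induction n with
  | zero => simp [wordBall]
  | succ n ih =>
    rw [wordBall, pow_succ]
    exact ih.mul ((hS.union hS.inv).insert 1)

theorem eventually_mem_wordBall (hg : g ∈ Subgroup.closure S) :
    ∀ᶠ n in atTop, g ∈ wordBall S n := by
  suffices ∃ n, g ∈ wordBall S n by
    obtain ⟨n, hn⟩ := this
    filter_upwards [eventually_ge_atTop n] with m hm using wordBall_mono_right hm hn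
  induction hg using Subgroup.closure_induction with
  | mem x hx => exact ⟨1, subset_wordBall_one hx⟩
  | one => exact ⟨0, one_mem_wordBall⟩
  | mul x y _ _ ihx ihy =>
    obtain ⟨m, hm⟩ := ihx
    obtain ⟨n, hn⟩ := ihy
    exact ⟨m + n, mul_mem_wordBall hm hn⟩
  | inv x _ ih =>
    obtain ⟨n, hn⟩ := ih
    exact ⟨n, inv_mem_wordBall hn⟩

theorem exists_subset_wordBall (hT : T.Finite) (h : T ⊆ Subgroup.closure S) :
    ∃ n, T ⊆ wordBall S n :=
  ((eventually_all_finite hT).2 fun _ hg => eventually_mem_wordBall (h hg)).exists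

theorem mem_wordBall_iff :
    g ∈ wordBall S n ↔ ∃ l : List G, l.length ≤ n ∧ (∀ x ∈ l, x ∈ S ∨ x⁻¹ ∈ S) ∧ l.prod = g := by
  constructor
  · intro hg
    induction n generalizing g with
    | zero => exact ⟨[], by simp_all [wordBall]⟩
    | succ n ih =>
      rw [wordBall, pow_succ'] at hg
      obtain ⟨x, hx, y, hy, rfl⟩ := hg
      obtain ⟨l, hl, hlS, rfl⟩ := ih hy
      rcases hx with rfl | hx
      · exact ⟨l, hl.trans n.le_succ, hlS, (one_mul _).symm⟩
      · exact ⟨x :: l, Nat.succ_le_succ hl, List.forall_mem_cons.2 ⟨hx, hlS⟩, List.prod_cons⟩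
  · rintro ⟨l, hl, hlS, rfl⟩
    refine wordBall_mono_right hl ?_
    induction l with
    | nil => exact one_mem_wordBall
    | cons x l ih =>
      rw [List.forall_mem_cons] at hlS
      rw [wordBall, List.length_cons, List.prod_cons, pow_succ']
      exact Set.mul_mem_mul (.inr hlS.1) (ih (Nat.le_of_succ_le hl) hlS.2)

theorem exists_word_of_mem_wordBall {M : Type*} [Group M] (p : G →* M)
    (hT : T ⊆ (p.ker : Set G) ∩ wordBall S m) (hg : g ∈ wordBall T n) :
    ∃ w : List G, w.length ≤ m * n ∧ (∀ x ∈ w, x ∈ S ∨ x⁻¹ ∈ S) ∧ w.prod = g ∧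
      ∀ i, ∃ b ∈ wordBall S m, p (w.drop i).prod = p b := by
  induction n generalizing g with
  | zero =>
    obtain rfl : g = 1 := by simpa [wordBall] using hg
    exact ⟨[], by simp, by simp, rfl, fun i => ⟨1, one_mem_wordBall, by simp⟩⟩
  | succ n ih =>
    rw [wordBall, pow_succ'] at hg
    obtain ⟨x, hx, y, hy, rfl⟩ := hg
    obtain ⟨w, hwlen, hw, rfl, hdrop⟩ := ih hy
    have hxS : x ∈ wordBall S m := by
      rcases hx with rfl | hx | hx
      · exact one_mem_wordBall
      · exact (hT hx).2
      · exact inv_inv x ▸ inv_mem_wordBall (hT hx).2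
    have hpw : p w.prod = 1 :=
      (Subgroup.closure_le _).2 (hT.trans Set.inter_subset_left) (wordBall_subset_closure hy)
    obtain ⟨u, hulen, hu, rfl⟩ := mem_wordBall_iff.1 hxS
    refine ⟨u ++ w, by rw [List.length_append, Nat.mul_succ]; omega,
      List.forall_mem_append.2 ⟨hu, hw⟩, List.prod_append, fun i => ?_⟩
    rw [List.drop_append]
    obtain hi | hi := le_total i u.length
    · refine ⟨(u.drop i).prod, mem_wordBall_iff.2 ⟨u.drop i, ?_, ?_, rfl⟩, ?_⟩
      · exact List.length_drop ▸ (Nat.sub_le _ _).trans hulen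
      · exact fun x hx => hu x (List.mem_of_mem_drop hx)
      · rw [Nat.sub_eq_zero_of_le hi, List.drop_zero, List.prod_append, map_mul, hpw, mul_one]
    · rw [List.drop_of_length_le hi]
      exact hdrop _

theorem wordLength_le_iff (hg : g ∈ Subgroup.closure S) :
    wordLength S g ≤ n ↔ g ∈ wordBall S n := by
  rw [mem_wordBall_iff]
  constructor
  · intro hn
    obtain ⟨m, hm⟩ := (eventually_mem_wordBall hg).exists
    obtain ⟨l, -, hl⟩ := mem_wordBall_iff.1 hm
    have attained : wordLength S g ∈
        {n | ∃ l : List G, l.length = n ∧ (∀ x ∈ l, x ∈ S ∨ x⁻¹ ∈ S) ∧ l.prod = g} :=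
      Nat.sInf_mem ⟨_, l, rfl, hl⟩
    obtain ⟨l, hln, hl⟩ := attained
    exact ⟨l, hln.trans_le hn, hl⟩
  · rintro ⟨l, hln, hl⟩
    refine le_trans (Nat.sInf_le ?_) hln
    exact ⟨l, rfl, hl⟩

theorem exists_abs_toAdd_le (p : G →* Multiplicative ℤ) (hS : S.Finite) :
    ∃ A : ℕ, ∀ x ∈ S, |(p x).toAdd| ≤ A := by
  obtain ⟨A, hA⟩ := (hS.image fun x => (p x).toAdd.natAbs).bddAbove
  refine ⟨A, fun x hx => ?_⟩
  rw [Int.abs_eq_natAbs]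
  exact_mod_cast hA ⟨x, hx, rfl⟩

theorem abs_toAdd_le_of_mem_wordBall (p : G →* Multiplicative ℤ) {A : ℕ}
    (hA : ∀ x ∈ S, |(p x).toAdd| ≤ A) (hg : g ∈ wordBall S n) : |(p g).toAdd| ≤ A * n := by
  induction n generalizing g with
  | zero => simp_all [wordBall]
  | succ n ih =>
    rw [wordBall, pow_succ'] at hg
    obtain ⟨x, hx, y, hy, rfl⟩ := hg
    have hxA : |(p x).toAdd| ≤ A := by
      rcases hx with rfl | hx | hx
      · simp
      · exact hA x hx
      · simpa using hA _ hx
    calc |(p (x * y)).toAdd| ≤ |(p x).toAdd| + |(p y).toAdd| := by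
          rw [map_mul, toAdd_mul]
          exact abs_add_le _ _
      _ ≤ A + A * n := add_le_add hxA (ih hy)
      _ = A * (n + 1 : ℕ) := by push_cast; ring

end WordBall

section Distortion

variable {G : Type*} [Group G] {S T : Set G} {H : Subgroup G} {m r : ℕ} {h : G}

theorem distortion_le (hS : Subgroup.closure S = ⊤) (hT : Subgroup.closure T = H)
    (hm : ∀ h ∈ H, h ∈ wordBall S r → h ∈ wordBall T m) : distortion S T H r ≤ m := by
  refine csSup_le' ?_
  rintro _ ⟨h, hH, hr, rfl⟩
  rw [wordLength_le_iff (hS ▸ Subgroup.mem_top h)] at hr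
  exact (wordLength_le_iff (hT ▸ hH)).2 (hm h hH hr)

theorem wordLength_le_distortion (hfin : S.Finite) (hS : Subgroup.closure S = ⊤) (hH : h ∈ H)
    (hr : h ∈ wordBall S r) : wordLength T h ≤ distortion S T H r := by
  have bounded : BddAbove {n | ∃ h ∈ H, wordLength S h ≤ r ∧ wordLength T h = n} := by
    refine ((finite_wordBall hfin r).image (wordLength T)).bddAbove.mono ?_
    rintro _ ⟨h, -, hr, rfl⟩
    exact ⟨h, (wordLength_le_iff (hS ▸ Subgroup.mem_top h)).1 hr, rfl⟩
  exact le_csSup bounded ⟨h, hH, (wordLength_le_iff (hS ▸ Subgroup.mem_top h)).2 hr, rfl⟩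

end Distortion

/-! ### Sweeping words of the kernel -/

section UpperBound

open scoped commutatorElement

variable {G V : Type*} [Group G] {S F : Set G} {m n : ℕ}

theorem conj_zpow_div_zpow_mem_wordBall {Γ : SimpleGraph V} {u : V → G} {g : G}
    (hcomm : ∀ v w, Γ.Adj v w → Commute (u v) (u w))
    (hF : ∀ v w, Γ.Adj v w → g * (u v / u w) * g⁻¹ ∈ F) {v w : V} (W : Γ.Walk v w) (q : ℤ) :
    g * (u v ^ q / u w ^ q) * g⁻¹ ∈ wordBall F (W.length * q.natAbs) := by
  induction W with
  | nil => simpa using one_mem_wordBall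
  | @cons a b c hab W ih =>
    have edge : g * (u a ^ q / u b ^ q) * g⁻¹ ∈ wordBall F (1 * q.natAbs) := by
      rw [div_eq_mul_inv, ← inv_zpow, ← (hcomm a b hab).inv_right.mul_zpow, ← conj_zpow]
      exact zpow_mem_wordBall (subset_wordBall_one (div_eq_mul_inv (u a) (u b) ▸ hF a b hab)) q
    have split : g * (u a ^ q / u c ^ q) * g⁻¹ =
        g * (u a ^ q / u b ^ q) * g⁻¹ * (g * (u b ^ q / u c ^ q) * g⁻¹) := by
      simp only [div_eq_mul_inv]; group
    rw [split, SimpleGraph.Walk.length_cons, add_comm, add_mul]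
    exact mul_mem_wordBall edge ih

theorem commutator_mem_wordBall {a : G} {c R : ℕ}
    (h : ∀ x ∈ S, ∃ b, Commute x b ∧ ∀ g ∈ wordBall S R, g * (a / b) * g⁻¹ ∈ wordBall F c)
    {g : G} (hg : g ∈ wordBall S n) (hn : n ≤ R) : ⁅a, g⁆ ∈ wordBall F (2 * c * n) := by
  induction n generalizing g with
  | zero =>
    obtain rfl : g = 1 := by simpa [wordBall] using hg
    simpa using one_mem_wordBall
  | succ n ih =>
    have gx_mem := hg
    rw [wordBall, pow_succ] at hg
    obtain ⟨g, hg, x, hx, rfl⟩ := hg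
    have ih := ih hg (Nat.le_of_succ_le hn)
    rw [Nat.mul_succ]
    obtain rfl | ⟨b, hxb, hb⟩ : x = 1 ∨ ∃ b, Commute x b ∧
        ∀ g ∈ wordBall S R, g * (a / b) * g⁻¹ ∈ wordBall F c := by
      rcases hx with rfl | hx | hx
      · exact .inl rfl
      · exact .inr (h x hx)
      · obtain ⟨b, hxb, hb⟩ := h _ hx
        exact .inr ⟨b, Commute.inv_left_iff.1 hxb, hb⟩
    · simpa using wordBall_mono_right (Nat.le_add_right _ _) ih
    have expand : ⁅a, g * x⁆ =
        ⁅a, g⁆ * (g * (a / b) * g⁻¹ * (g * x * (a / b) * (g * x)⁻¹)⁻¹) := by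
      have : x * b * x⁻¹ = b := by rw [hxb.eq, mul_inv_cancel_right]
      calc ⁅a, g * x⁆ = a * (g * x) * a⁻¹ * (g * x)⁻¹ := rfl
        _ = ⁅a, g⁆ * (g * (a / (x * b * x⁻¹)) * g⁻¹ * (g * x * (a / b) * (g * x)⁻¹)⁻¹) := by
          simp only [commutatorElement_def, div_eq_mul_inv]; group
        _ = _ := by rw [this]
    have tail := mul_mem_wordBall (hb g (wordBall_mono_right (Nat.le_of_succ_le hn) hg))
      (inv_mem_wordBall (hb (g * x) (wordBall_mono_right hn gx_mem)))
    rw [expand]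
    exact wordBall_mono_right (by rw [two_mul c]) (mul_mem_wordBall ih tail)

theorem exists_zpow_eq_ne_one [Finite V] {a : V → Multiplicative ℤ} (ha : ∀ v, a v ≠ 1) :
    ∃ k : V → ℤ, ∃ z ≠ 1, ∀ v, a v ^ k v = z := by
  have := Fintype.ofFinite V
  set L : ℤ := ∏ v, (a v).toAdd
  have hL : L ≠ 0 := Finset.prod_ne_zero_iff.2 fun v _ => by simpa using ha v
  refine ⟨fun v => L / (a v).toAdd, .ofAdd L, by simpa using hL, fun v => ?_⟩
  refine Multiplicative.toAdd.injective ?_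
  rw [toAdd_zpow, smul_eq_mul, toAdd_ofAdd]
  exact Int.ediv_mul_cancel (Finset.dvd_prod_of_mem _ (Finset.mem_univ v))

theorem natAbs_le_of_map_eq (p : G →* Multiplicative ℤ) {A : ℕ}
    (hA : ∀ x ∈ S, |(p x).toAdd| ≤ A) {t g e : G} {k : ℤ} (ht : p t ≠ 1)
    (hg : g ∈ wordBall S m) (he : e ∈ wordBall S n) (hge : p g = p (t ^ k * e)) :
    k.natAbs ≤ A * (m + n) := by
  have hτ : (p t).toAdd ≠ 0 := by simpa using ht
  have hk : (p g).toAdd - (p e).toAdd = k * (p t).toAdd := by simp [hge]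
  zify
  calc |k| ≤ |k * (p t).toAdd| := by
        rw [abs_mul]
        exact le_mul_of_one_le_right (abs_nonneg k) (Int.one_le_abs hτ)
    _ ≤ |(p g).toAdd| + |(p e).toAdd| := hk ▸ abs_sub _ _
    _ ≤ A * m + A * n := add_le_add (abs_toAdd_le_of_mem_wordBall p hA hg)
        (abs_toAdd_le_of_mem_wordBall p hA he)
    _ = A * (m + n) := (mul_add _ _ _).symm

theorem div_mem_ker_inter_wordBall (p : G →* Multiplicative ℤ) {A : ℕ}
    (hA : ∀ x ∈ S, |(p x).toAdd| ≤ A) {t g e : G} {k : ℤ} {l : ℕ} (ht : p t ≠ 1)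
    (htl : t ∈ wordBall S l) (hg : g ∈ wordBall S m) (he : e ∈ wordBall S n)
    (hge : p g = p (t ^ k * e)) :
    g / (t ^ k * e) ∈ (p.ker : Set G) ∩ wordBall S (m + (l * (A * (m + n)) + n)) := by
  refine ⟨by simp [MonoidHom.mem_ker, hge], ?_⟩
  have htk := wordBall_mono_right (Nat.mul_le_mul_left l (natAbs_le_of_map_eq p hA ht hg he hge))
    (zpow_mem_wordBall htl k)
  rw [div_eq_mul_inv]
  exact mul_mem_wordBall hg (inv_mem_wordBall (mul_mem_wordBall htk he))

theorem exists_map_eq_map_zpow_mul (p : G →* Multiplicative ℤ) (hS : Subgroup.closure S = ⊤)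
    {t : G} (ht : p t ≠ 1) :
    ∃ R, ∀ g, ∃ k : ℤ, ∃ e ∈ wordBall S R, p g = p (t ^ k * e) := by
  have : NeZero (p t).toAdd.natAbs := ⟨by simpa using ht⟩
  let residue (g : G) : ZMod (p t).toAdd.natAbs := ((p g).toAdd : ℤ)
  obtain ⟨R, hR⟩ := exists_subset_wordBall (Set.finite_range (Set.rangeSplitting residue))
    (S := S) fun g _ => hS ▸ Subgroup.mem_top g
  refine ⟨R, fun g => ?_⟩
  set e := Set.rangeSplitting residue ⟨residue g, g, rfl⟩
  obtain ⟨k, hk⟩ : (p t).toAdd ∣ (p g).toAdd - (p e).toAdd := by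
    rw [← Int.natAbs_dvd, ← ZMod.intCast_eq_intCast_iff_dvd_sub]
    exact Set.apply_rangeSplitting residue _
  refine ⟨k, e, hR ⟨_, rfl⟩, Multiplicative.toAdd.injective ?_⟩
  rw [map_mul, map_zpow, toAdd_mul, toAdd_zpow, smul_eq_mul, mul_comm k, ← hk, sub_add_cancel]

-- Sweeping along a word, a prefix `g` is kept in the form `f * t ^ k * e`.
theorem exists_eq_mul_zpow_mul {E : Set G} {t : G} {C Q : ℕ} (one_mem : 1 ∈ E)
    (step : ∀ e ∈ E, ∀ x ∈ wordBall S 1, ∃ k : ℤ, k.natAbs ≤ Q ∧ ∃ e' ∈ E,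
      ∀ q : ℤ, t ^ q * (e * x / (t ^ k * e')) * (t ^ q)⁻¹ ∈ wordBall F (C * q.natAbs + 1))
    {g : G} (hg : g ∈ wordBall S n) :
    ∃ f ∈ wordBall F ((C * (Q * n) + 1) * n), ∃ k : ℤ, k.natAbs ≤ Q * n ∧ ∃ e ∈ E,
      g = f * t ^ k * e := by
  induction n generalizing g with
  | zero =>
    obtain rfl : g = 1 := by simpa [wordBall] using hg
    exact ⟨1, one_mem_wordBall, 0, by simp, 1, one_mem, by simp⟩
  | succ n ih =>
    rw [wordBall, pow_succ] at hg
    obtain ⟨g, hg, x, hx, rfl⟩ := hg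
    obtain ⟨f, hf, k, hk, e, he, rfl⟩ := ih hg
    obtain ⟨k', hk', e', he', hconj⟩ := step e he x (by simpa [wordBall] using hx)
    refine ⟨f * (t ^ k * (e * x / (t ^ k' * e')) * (t ^ k)⁻¹),
      wordBall_mono_right ?_ (mul_mem_wordBall hf (hconj k)), k + k', ?_, e', he', by
        simp only [div_eq_mul_inv]; group⟩
    · have : C * k.natAbs ≤ C * (Q * (n + 1)) := by gcongr; nlinarith
      have : (C * (Q * n) + 1) * n ≤ (C * (Q * (n + 1)) + 1) * n := by gcongr; omega
      linarith
    · have := Int.natAbs_add_le k k'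
      linarith

variable {Γ : SimpleGraph V} [Finite V] {s : V → G}

theorem conj_zpow_mem_wordBall {M : Type*} [Group M] (p : G →* M) (hconn : Γ.Connected)
    (hs : Subgroup.closure (Set.range s) = ⊤) {u : V → G} {z : M}
    (hsu : ∀ v, Commute (s v) (u v)) (hcomm : ∀ v w, Γ.Adj v w → Commute (u v) (u w))
    (hu : ∀ v, p (u v) = z) (v₀ : V) (R : ℕ) :
    ∃ R' C, ∀ y ∈ (p.ker : Set G) ∩ wordBall (Set.range s) R, ∀ q : ℤ,
      u v₀ ^ q * y * (u v₀ ^ q)⁻¹ ∈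
        wordBall ((p.ker : Set G) ∩ wordBall (Set.range s) R') (C * q.natAbs + 1) := by
  obtain ⟨L, hL⟩ := exists_subset_wordBall (S := Set.range s)
    (Set.finite_range fun i : V × V => u i.1 / u i.2) fun g _ => hs ▸ Subgroup.mem_top g
  obtain ⟨D, hD⟩ := Finite.exists_le fun w => Γ.dist v₀ w
  set F := (p.ker : Set G) ∩ wordBall (Set.range s) (R + L + R)
  have conj_div (q : ℤ) (v : V) (g : G) (hg : g ∈ wordBall (Set.range s) R) :
      g * (u v₀ ^ q / u v ^ q) * g⁻¹ ∈ wordBall F (D * q.natAbs) := by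
    obtain ⟨W, hW⟩ := hconn.exists_walk_length_eq_dist v₀ v
    refine wordBall_mono_right (Nat.mul_le_mul_right _ (hW.trans_le (hD v)))
      (conj_zpow_div_zpow_mem_wordBall hcomm (fun v w _ => Set.mem_inter ?_ ?_) W q)
    · simp [hu, MonoidHom.mem_ker]
    · exact mul_mem_wordBall (mul_mem_wordBall hg (hL ⟨(v, w), rfl⟩)) (inv_mem_wordBall hg)
  refine ⟨R + L + R, 2 * D * R, fun y hy q => ?_⟩
  have hyF : y ∈ F := ⟨hy.1, wordBall_mono_right (by omega) hy.2⟩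
  have key : ⁅u v₀ ^ q, y⁆ ∈ wordBall F (2 * (D * q.natAbs) * R) := by
    refine commutator_mem_wordBall ?_ hy.2 le_rfl
    rintro _ ⟨v, rfl⟩
    exact ⟨u v ^ q, (hsu v).zpow_right q, conj_div q v⟩
  have conj_eq : u v₀ ^ q * y * (u v₀ ^ q)⁻¹ = ⁅u v₀ ^ q, y⁆ * y := by
    rw [commutatorElement_def, inv_mul_cancel_right]
  rw [conj_eq, mul_right_comm, mul_assoc 2]
  exact mul_mem_wordBall key (subset_wordBall_one hyF)

theorem ker_inter_wordBall_subset (hconn : Γ.Connected)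
    (hs : Subgroup.closure (Set.range s) = ⊤)
    (hcomm : ∀ v w, Γ.Adj v w → Commute (s v) (s w))
    (p : G →* Multiplicative ℤ) (hp : ∀ v, p (s v) ≠ 1) :
    ∃ F : Set G, F.Finite ∧ F ⊆ p.ker ∧ ∃ C, ∀ r,
      (p.ker : Set G) ∩ wordBall (Set.range s) r ⊆ wordBall F (C * (r + 1) ^ 2) := by
  obtain ⟨k, z, hz, hk⟩ := exists_zpow_eq_ne_one hp
  obtain ⟨v₀⟩ := hconn.nonempty
  set t := s v₀ ^ k v₀
  have ht : p t ≠ 1 := by rwa [map_zpow, hk v₀]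
  obtain ⟨A, hA⟩ := exists_abs_toAdd_le p (Set.finite_range s)
  obtain ⟨ℓ, hℓ⟩ := (eventually_mem_wordBall (S := Set.range s) (hs ▸ Subgroup.mem_top t)).exists
  obtain ⟨R, hR⟩ := exists_map_eq_map_zpow_mul p hs ht
  set Q := A * (R + 1 + R)
  obtain ⟨R', C, hC⟩ := conj_zpow_mem_wordBall p hconn hs
    (fun v => (Commute.refl (s v)).zpow_right (k v))
    (fun v w h => (hcomm v w h).zpow_zpow (k v) (k w))
    (fun v => (map_zpow p _ _).trans (hk v)) v₀ (R + 1 + (ℓ * Q + R))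
  set F := (p.ker : Set G) ∩ wordBall (Set.range s) R'
  have hF : F ⊆ p.ker := Set.inter_subset_left
  refine ⟨F, (finite_wordBall (Set.finite_range s) R').inter_of_right _, hF, C * Q + 1, ?_⟩
  rintro r g ⟨hgker, hgr⟩
  obtain ⟨f, hf, k, -, e, he, rfl⟩ := exists_eq_mul_zpow_mul (F := F) (t := t)
    (E := wordBall (Set.range s) R) (C := C) (Q := Q) one_mem_wordBall (fun e he x hx => by
      obtain ⟨k, e', he', hge⟩ := hR (e * x)
      have hex := mul_mem_wordBall he hx
      exact ⟨k, natAbs_le_of_map_eq p hA ht hex he' hge, e', he',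
        hC _ (div_mem_ker_inter_wordBall p hA ht hℓ hex he' hge)⟩) hgr
  have hf_ker : p f = 1 := (Subgroup.closure_le _).2 hF (wordBall_subset_closure hf)
  have rest_mem : t ^ k * e ∈ wordBall F 1 := by
    have h1 : p 1 = p (t ^ k * e) := by
      simpa [MonoidHom.mem_ker, mul_assoc, hf_ker, eq_comm] using hgker
    simpa using inv_mem_wordBall
      (hC _ (div_mem_ker_inter_wordBall p hA ht hℓ one_mem_wordBall he h1) 0)
  rw [mul_assoc]
  refine wordBall_mono_right ?_ (mul_mem_wordBall hf rest_mem)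
  nlinarith [Nat.zero_le (C * Q * r)]

end UpperBound

theorem sq_le_of_forall_le_add_sub {T : ℕ → ℤ} {B : ℤ} {n : ℕ}
    (h : ∀ k < n, (k : ℤ) + 1 ≤ B + (T k - T (k + 1))) :
    (n : ℤ) ^ 2 ≤ 2 * (B * n + (T 0 - T n)) := by
  induction n with
  | zero => simp
  | succ n ih =>
    push_cast
    linarith [ih fun k hk => h k (hk.trans n.lt_succ_self), h n n.lt_succ_self]

section Graph

variable {V : Type*} {G : SimpleGraph V}

theorem preconnected_compl_of_not_isJoin (h : ¬IsJoin G) : Gᶜ.Preconnected := by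
  by_contra! hG
  obtain ⟨a, b, hab⟩ : ∃ a b, ¬Gᶜ.Reachable a b := by simpa [SimpleGraph.Preconnected] using hG
  refine h ⟨{w | Gᶜ.Reachable a w}, {w | Gᶜ.Reachable a w}ᶜ, ⟨a, .refl a⟩, ⟨b, hab⟩,
    disjoint_compl_right, Set.union_compl_self _, fun u hu v hv => ?_⟩
  by_contra hadj
  have hne : u ≠ v := fun huv => hv (huv ▸ hu)
  exact hv (hu.trans (SimpleGraph.Adj.reachable ((SimpleGraph.compl_adj ..).2 ⟨hne, hadj⟩)))

theorem exists_closed_walk_forall_mem_support [Finite V] (hG : G.Preconnected) (v : V) :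
    ∃ q : G.Walk v v, ∀ w, w ∈ q.support := by
  classical
  have := Fintype.ofFinite V
  suffices ∀ s : Finset V, ∃ q : G.Walk v v, ∀ w ∈ s, w ∈ q.support by
    simpa using this Finset.univ
  intro s
  induction s using Finset.induction_on with
  | empty => exact ⟨.nil, by simp⟩
  | insert x s _ ih =>
    obtain ⟨q, hq⟩ := ih
    obtain ⟨r⟩ := hG v x
    refine ⟨q.append (r.append r.reverse), (Finset.forall_mem_insert ..).2 ⟨?_, ?_⟩⟩
    · simp
    · exact fun w hw => (SimpleGraph.Walk.mem_support_append_iff _ _).2 (.inl (hq w hw))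

theorem exists_periodic_covering [Finite V] [Nontrivial V] (hG : G.Connected) :
    ∃ v : ℕ → V, ∃ m, (∀ j, G.Adj (v j) (v (j + 1))) ∧ Function.Periodic v m ∧
      ∀ j w, ∃ i < m, v (j + i) = w := by
  obtain ⟨v₀⟩ := hG.nonempty
  obtain ⟨q, hq⟩ := exists_closed_walk_forall_mem_support hG.preconnected v₀
  have hpos : 0 < q.length := by
    obtain ⟨w, hw⟩ := exists_ne v₀
    refine Nat.pos_of_ne_zero fun h => hw ?_
    have := hq w
    rwa [SimpleGraph.Walk.nil_iff_support_eq.1 (SimpleGraph.Walk.length_eq_zero_iff.1 h),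
      List.mem_singleton] at this
  let v (j : ℕ) : V := q.getVert (j % q.length)
  have hv {k : ℕ} (hk : k ≤ q.length) : v k = q.getVert k := by
    obtain h | rfl := hk.lt_or_eq
    · simp only [v, Nat.mod_eq_of_lt h]
    · simp [v]
  have hper : Function.Periodic v q.length := fun j => by simp [v]
  refine ⟨v, q.length, fun j => ?_, hper, fun j w => ?_⟩
  · have hj := Nat.mod_lt j hpos
    have succ : v (j + 1) = v (j % q.length + 1) := by simp only [v, Nat.mod_add_mod]
    rw [succ, hv hj]
    exact q.adj_getVert_succ hj
  · obtain ⟨k, rfl, hk⟩ := SimpleGraph.Walk.mem_support_iff_exists_getVert.1 (hq w)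
    have : k % q.length ∈ (Finset.Ico j (j + q.length)).image (· % q.length) := by
      rw [Nat.image_Ico_mod]
      exact Finset.mem_range.2 (Nat.mod_lt k hpos)
    obtain ⟨i, hi, hik⟩ := Finset.mem_image.1 this
    obtain ⟨i, rfl⟩ := Nat.exists_eq_add_of_le (Finset.mem_Ico.1 hi).1
    exact ⟨i, by simpa using (Finset.mem_Ico.1 hi).2, by rw [← hv hk]; exact congrArg q.getVert hik⟩

end Graph

section RAAG

variable {V : Type*} {Γ : SimpleGraph V}

theorem closure_range_raagGen : Subgroup.closure (Set.range (raagGen Γ)) = ⊤ :=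
  PresentedGroup.closure_range_of (raagRels Γ)

theorem commute_raagGen {v w : V} (h : Γ.Adj v w) :
    Commute (raagGen Γ v) (raagGen Γ w) := by
  have rel : PresentedGroup.mk (raagRels Γ) _ = 1 := PresentedGroup.one_of_mem ⟨v, w, h, rfl⟩
  simp only [map_mul, map_inv] at rel
  exact mul_inv_eq_iff_eq_mul.1 (mul_inv_eq_one.1 rel)

end RAAG

/-! ### Pilings of reduced words -/

/-- A letter of the alphabet of `RAAG Γ`: `(v, true)` stands for the generator `v` and `(v, false)`
for its inverse, as in `FreeGroup`. -/
abbrev Letter (V : Type*) := V × Bool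

/-- A heap of letters, recorded by its projections to pairs of vertices (Green's pilings): a list
of letters for every pair, the most recently added letter first. -/
abbrev Piling (V : Type*) := V × V → List (Letter V)

section Piling

variable {V : Type*} {Γ : SimpleGraph V} {l l₁ l₂ : Letter V} {x y y₁ y₂ z : Piling V}

namespace Letter

/-- The formal inverse of a letter. -/
def inv (l : Letter V) : Letter V := (l.1, !l.2)

@[simp] theorem inv_fst : (inv l).1 = l.1 := rfl

@[simp] theorem inv_inv : inv (inv l) = l := Prod.ext rfl (Bool.not_not l.2)

/-- The element of `RAAG Γ` that a letter represents. -/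
def val (Γ : SimpleGraph V) (l : Letter V) : RAAG Γ := cond l.2 (raagGen Γ l.1) (raagGen Γ l.1)⁻¹

theorem val_inv : val Γ (inv l) = (val Γ l)⁻¹ := by
  obtain ⟨v, _ | _⟩ := l <;> simp [val, inv]

end Letter

namespace Piling

/-- The coordinates of a piling that see the letters at `v`: the pairs of non-adjacent vertices
containing `v`. In particular `(v, v)` is one of them. -/
def columns (Γ : SimpleGraph V) (v : V) : Set (V × V) := {i | ¬Γ.Adj i.1 i.2 ∧ (i.1 = v ∨ i.2 = v)}

theorem diag_mem_columns (Γ : SimpleGraph V) (v : V) : (v, v) ∈ columns Γ v :=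
  ⟨Γ.loopless.irrefl v, .inl rfl⟩

theorem diag_mem_columns_iff {v w : V} : (v, v) ∈ columns Γ w ↔ v = w := by
  simp [columns]

theorem notMem_columns_of_adj {v w : V} (h : Γ.Adj v w) {i : V × V} (hi : i ∈ columns Γ v) :
    i ∉ columns Γ w := by
  obtain ⟨a, b⟩ := i
  rintro ⟨-, hw⟩
  obtain ⟨hab, hv⟩ := hi
  have := h.symm
  have := h.ne
  aesop

theorem mem_columns_of_not_adj {v w : V} (h : ¬Γ.Adj v w) :
    (v, w) ∈ columns Γ v ∧ (v, w) ∈ columns Γ w := ⟨⟨h, .inl rfl⟩, h, .inr rfl⟩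

open Classical in
/-- Adding a letter on top of a piling. -/
noncomputable def push (Γ : SimpleGraph V) (l : Letter V) (x : Piling V) : Piling V :=
  fun i => if i ∈ columns Γ l.1 then l :: x i else x i

theorem push_of_mem {i : V × V} (hi : i ∈ columns Γ l.1) : push Γ l x i = l :: x i := if_pos hi

theorem push_of_notMem {i : V × V} (hi : i ∉ columns Γ l.1) : push Γ l x i = x i := if_neg hi

theorem push_diag : push Γ l x (l.1, l.1) = l :: x (l.1, l.1) :=
  push_of_mem (diag_mem_columns Γ l.1)

theorem push_diag_of_ne {v : V} (h : v ≠ l.1) : push Γ l x (v, v) = x (v, v) :=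
  push_of_notMem (mt diag_mem_columns_iff.1 h)

theorem push_ne_nil : push Γ l x ≠ fun _ => [] := fun h => by
  simpa [push_diag] using congrFun h (l.1, l.1)

theorem push_injective : Function.Injective (push Γ l) := fun x y h => by
  funext i
  have hi := congrFun h i
  by_cases hl : i ∈ columns Γ l.1
  · simpa [push_of_mem hl] using hi
  · simpa [push_of_notMem hl] using hi

theorem push_comm (h : Γ.Adj l₁.1 l₂.1) :
    push Γ l₁ (push Γ l₂ x) = push Γ l₂ (push Γ l₁ x) := by
  funext i
  have := fun h₁ => notMem_columns_of_adj (i := i) h h₁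
  simp only [push]
  split_ifs <;> tauto

theorem adj_of_push_eq_push (hl : l₁ ≠ l₂) (h : push Γ l₁ x = push Γ l₂ y) :
    Γ.Adj l₁.1 l₂.1 := by
  by_contra hadj
  obtain ⟨h₁, h₂⟩ := mem_columns_of_not_adj hadj
  have top := congrFun h (l₁.1, l₂.1)
  rw [push_of_mem h₁, push_of_mem h₂] at top
  exact hl (List.cons.inj top).1

theorem exists_of_push_eq_push (hl : l₁ ≠ l₂) (h : push Γ l₁ x = push Γ l₂ y) :
    ∃ z, x = push Γ l₂ z ∧ y = push Γ l₁ z := by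
  classical
  have hadj := adj_of_push_eq_push hl h
  refine ⟨fun i => if i ∈ columns Γ l₁.1 then x i else y i, funext fun i => ?_, funext fun i => ?_⟩
  all_goals
    have hi := congrFun h i
    have := fun h₁ => notMem_columns_of_adj (i := i) hadj h₁
    simp only [push] at hi ⊢
    split_ifs at hi ⊢ <;> simp_all

/-- The pilings of reduced words: a letter is never put directly on top of its inverse. -/
inductive IsReduced (Γ : SimpleGraph V) : Piling V → Prop
  | empty : IsReduced Γ fun _ => []
  | cons {l : Letter V} {x : Piling V} : IsReduced Γ x → (∀ y, x ≠ push Γ l.inv y) →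
      IsReduced Γ (push Γ l x)

theorem IsReduced.of_push (h : IsReduced Γ (push Γ l x)) :
    IsReduced Γ x ∧ ∀ y, x ≠ push Γ l.inv y := by
  generalize hz : push Γ l x = z at h
  induction h generalizing x with
  | empty => exact (push_ne_nil hz).elim
  | @cons m z hz_red hm ih =>
    obtain rfl | hlm := eq_or_ne l m
    · obtain rfl := push_injective hz
      exact ⟨hz_red, hm⟩
    have hadj := adj_of_push_eq_push hlm hz
    obtain ⟨w, rfl, rfl⟩ := exists_of_push_eq_push hlm hz
    obtain ⟨hw, hwl⟩ := ih rfl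
    refine ⟨hw.cons ?_, fun y hy => ?_⟩
    · rintro y rfl
      exact hm _ (push_comm hadj)
    · have hml : m ≠ l.inv := by
        rintro rfl
        exact hadj.ne rfl
      obtain ⟨y', hy', -⟩ := exists_of_push_eq_push hml hy
      exact hwl y' hy'

/-- One piling is obtained from another by multiplying by the letter `l`: either `l` is added, or
it cancels the top letter. -/
def Step (Γ : SimpleGraph V) (l : Letter V) (x y : Piling V) : Prop :=
  y = push Γ l x ∨ x = push Γ l.inv y

theorem Step.symm (h : Step Γ l x y) : Step Γ l.inv y x :=
  (Or.symm h).imp_right fun h => by rwa [Letter.inv_inv]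

theorem Step.unique (hy₁ : IsReduced Γ y₁) (hy₂ : IsReduced Γ y₂) (h₁ : Step Γ l x y₁)
    (h₂ : Step Γ l x y₂) : y₁ = y₂ := by
  rcases h₁ with rfl | rfl <;> rcases h₂ with rfl | h₂
  · rfl
  · exact (hy₁.of_push.2 _ h₂).elim
  · exact (hy₂.of_push.2 _ rfl).elim
  · exact push_injective h₂

theorem IsReduced.exists_step (hx : IsReduced Γ x) (l : Letter V) :
    ∃ y, IsReduced Γ y ∧ Step Γ l x y := by
  by_cases h : ∃ y, x = push Γ l.inv y
  · obtain ⟨y, rfl⟩ := h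
    exact ⟨y, hx.of_push.1, .inr rfl⟩
  · exact ⟨_, hx.cons (not_exists.1 h), .inl rfl⟩

theorem Step.exists_square (hadj : Γ.Adj l₁.1 l₂.1) (hy₁ : IsReduced Γ y₁)
    (hy₂ : IsReduced Γ y₂) (h₁ : Step Γ l₁ x y₁) (h₂ : Step Γ l₂ x y₂) :
    ∃ z, IsReduced Γ z ∧ Step Γ l₂ y₁ z ∧ Step Γ l₁ y₂ z := by
  have inv_ne : l₁.inv ≠ l₂.inv := fun h => hadj.ne (congrArg (·.1) h)
  have ne_inv : l₁ ≠ l₂.inv := fun h => hadj.ne (congrArg (·.1) h)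
  rcases h₁ with rfl | rfl <;> rcases h₂ with rfl | h₂
  · refine ⟨push Γ l₂ (push Γ l₁ x), hy₁.cons fun y hy => ?_, .inl rfl, .inl (push_comm hadj.symm)⟩
    obtain ⟨w, rfl, -⟩ := exists_of_push_eq_push ne_inv hy
    exact hy₂.of_push.2 _ rfl
  · subst h₂
    rw [push_comm (l₂ := l₂.inv) hadj] at hy₁
    exact ⟨push Γ l₁ y₂, hy₁.of_push.1, .inr (push_comm (l₂ := l₂.inv) hadj), .inl rfl⟩
  · rw [push_comm (l₂ := l₁.inv) hadj.symm] at hy₂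
    exact ⟨push Γ l₂ y₁, hy₂.of_push.1, .inl rfl, .inr (push_comm (l₂ := l₁.inv) hadj.symm)⟩
  · obtain ⟨w, rfl, rfl⟩ := exists_of_push_eq_push inv_ne h₂
    exact ⟨w, hy₁.of_push.1, .inr rfl, .inr rfl⟩

/-- The result of multiplying a reduced piling by a letter. -/
noncomputable def letterMul (l : Letter V) (x : {x // IsReduced Γ x}) : {x // IsReduced Γ x} :=
  ⟨(x.2.exists_step l).choose, (x.2.exists_step l).choose_spec.1⟩

theorem step_letterMul (l : Letter V) (x : {x // IsReduced Γ x}) : Step Γ l x (letterMul l x) :=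
  (x.2.exists_step l).choose_spec.2

theorem letterMul_eq_iff {x y : {x // IsReduced Γ x}} : letterMul l x = y ↔ Step Γ l x y :=
  ⟨fun h => h ▸ step_letterMul l x,
    fun h => Subtype.ext (Step.unique (Subtype.prop _) y.2 (step_letterMul l x) h)⟩

/-- The permutation of the reduced pilings by which a letter acts. -/
noncomputable def letterPerm (Γ : SimpleGraph V) (l : Letter V) :
    Equiv.Perm {x // IsReduced Γ x} where
  toFun := letterMul l
  invFun := letterMul l.inv
  left_inv x := letterMul_eq_iff.2 (step_letterMul l x).symm
  right_inv x := letterMul_eq_iff.2 (by simpa using (step_letterMul l.inv x).symm)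

theorem letterPerm_comm (hadj : Γ.Adj l₁.1 l₂.1) :
    Commute (letterPerm Γ l₁) (letterPerm Γ l₂) := by
  refine Equiv.ext fun x => ?_
  obtain ⟨z, hz, h₂, h₁⟩ := Step.exists_square hadj (letterMul l₁ x).2 (letterMul l₂ x).2
    (step_letterMul l₁ x) (step_letterMul l₂ x)
  exact (letterMul_eq_iff (y := ⟨z, hz⟩).2 h₁).trans (letterMul_eq_iff.2 h₂).symm

/-- The action of `RAAG Γ` on the reduced pilings. -/
noncomputable def raagPerm (Γ : SimpleGraph V) : RAAG Γ →* Equiv.Perm {x // IsReduced Γ x} :=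
  PresentedGroup.toGroup (f := fun v => letterPerm Γ (v, true)) <| by
    rintro _ ⟨u, v, huv, rfl⟩
    have := letterPerm_comm (l₁ := (u, true)) (l₂ := (v, true)) huv
    simp only [map_mul, map_inv, FreeGroup.lift_apply_of]
    rw [this.eq, mul_inv_cancel_right, mul_inv_cancel]

theorem raagPerm_val (l : Letter V) : raagPerm Γ (l.val Γ) = letterPerm Γ l := by
  have of_gen (v : V) : raagPerm Γ (raagGen Γ v) = letterPerm Γ (v, true) :=
    PresentedGroup.toGroup.of _
  obtain ⟨v, _ | _⟩ := l
  · exact (map_inv _ _).trans (congrArg (·⁻¹) (of_gen v))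
  · exact of_gen v

/-- The piling of an element of `RAAG Γ`. -/
noncomputable def ofRAAG (g : RAAG Γ) : Piling V := (raagPerm Γ g ⟨_, .empty⟩).1

theorem isReduced_ofRAAG (g : RAAG Γ) : IsReduced Γ (ofRAAG g) := Subtype.prop _

theorem ofRAAG_one : ofRAAG (1 : RAAG Γ) = fun _ => [] := by
  simp [ofRAAG]

theorem step_ofRAAG (l : Letter V) (g : RAAG Γ) :
    Step Γ l (ofRAAG g) (ofRAAG (l.val Γ * g)) := by
  rw [ofRAAG, ofRAAG, map_mul, raagPerm_val]
  exact step_letterMul l _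

theorem ofRAAG_val_mul {g : RAAG Γ} (h : IsReduced Γ (push Γ l (ofRAAG g))) :
    ofRAAG (l.val Γ * g) = push Γ l (ofRAAG g) :=
  Step.unique (isReduced_ofRAAG _) h (step_ofRAAG l g) (.inl rfl)

/-! ### Heights, prefixes and rigid chains -/

theorem IsReduced.countP_eq [DecidableEq V] (hx : IsReduced Γ x) {v : V} {i : V × V}
    (hi : i ∈ columns Γ v) : (x i).countP (·.1 = v) = (x (v, v)).length := by
  induction hx with
  | empty => rfl
  | @cons l x _ _ ih =>
    obtain rfl | hv := eq_or_ne v l.1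
    · simp [push_of_mem hi, push_diag, ih]
    · rw [push_diag_of_ne hv, ← ih]
      by_cases hl : i ∈ columns Γ l.1
      · simp [push_of_mem hl, hv.symm]
      · rw [push_of_notMem hl]

theorem Step.length_diag_le (h : Step Γ l x y) (v : V) :
    (x (v, v)).length ≤ (y (v, v)).length + 1 := by
  rcases h with rfl | rfl <;> obtain rfl | hv := eq_or_ne v l.1
  · rw [push_diag, List.length_cons]
    omega
  · rw [push_diag_of_ne hv]
    omega
  · exact (congrArg List.length push_diag).le
  · exact (congrArg List.length (push_diag_of_ne (l := l.inv) hv)).le.trans (Nat.le_succ _)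

/-- A word for `g` is a suffix of a word for `x`, as far as the columns can tell. -/
def IsSuffix (g x : Piling V) : Prop := ∀ i, g i <:+ x i

theorem IsSuffix.trans (h₁ : IsSuffix x y) (h₂ : IsSuffix y z) : IsSuffix x z :=
  fun i => (h₁ i).trans (h₂ i)

section Height

variable [Fintype V] {f : Letter V → ℤ}

/-- The total weight of the letters of a piling. -/
def height (f : Letter V → ℤ) (x : Piling V) : ℤ := ∑ v, ((x (v, v)).map f).sum

theorem height_push : height f (push Γ l x) = f l + height f x := by
  classical
  rw [height, height, ← Finset.add_sum_erase _ _ (Finset.mem_univ l.1), push_diag, List.map_cons,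
    List.sum_cons, add_assoc, ← Finset.add_sum_erase _ _ (Finset.mem_univ l.1)]
  refine congrArg _ (congrArg _ (Finset.sum_congr rfl fun v hv => ?_))
  rw [push_diag_of_ne (Finset.ne_of_mem_erase hv)]

theorem Step.height_eq (hf : ∀ l : Letter V, f l.inv = -f l) (h : Step Γ l x y) :
    height f y = f l + height f x := by
  rcases h with rfl | rfl
  · exact height_push
  · rw [height_push, hf, add_neg_cancel_left]

theorem height_le_height_of_isSuffix {A E : ℕ} {g : Piling V} (hA : ∀ l, -(A : ℤ) ≤ f l)
    (hgx : IsSuffix g x) (hE : ∀ v, (x (v, v)).length ≤ (g (v, v)).length + E) :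
    height f g ≤ height f x + Fintype.card V * (A * E) := by
  have column (v : V) : ((g (v, v)).map f).sum ≤ ((x (v, v)).map f).sum + A * E := by
    obtain ⟨t, ht⟩ := hgx (v, v)
    have hlen := hE v
    rw [← ht, List.length_append] at hlen
    have htop := List.card_nsmul_le_sum (t.map f) (-(A : ℤ))
      (List.forall_mem_map.2 fun l _ => hA l)
    rw [← ht, List.map_append, List.sum_append]
    have : (A : ℤ) * t.length ≤ A * E := by gcongr; omega
    simp only [List.length_map, nsmul_eq_mul] at htop
    linarith
  calc height f g ≤ ∑ v, (((x (v, v)).map f).sum + A * E) := Finset.sum_le_sum fun v _ => column v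
    _ = _ := by rw [Finset.sum_add_distrib, Finset.sum_const, Finset.card_univ, nsmul_eq_mul]; rfl

end Height

theorem isSuffix_push : IsSuffix x (push Γ l x) := fun i => by
  by_cases hi : i ∈ columns Γ l.1
  · rw [push_of_mem hi]
    exact List.suffix_cons l _
  · rw [push_of_notMem hi]

-- If adding the letter `l` completes a copy of `g` inside `x`, then `g` ends with this very letter.
theorem eq_cons_of_isSuffix_push {g : Piling V} (hg : IsReduced Γ g) (hx : IsReduced Γ x)
    (hpush : IsSuffix g (push Γ l x)) (hnot : ¬IsSuffix g x) {i : V × V}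
    (hi : i ∈ columns Γ l.1) : g i = l :: x i := by
  classical
  have eq_or (i : V × V) (hi : i ∈ columns Γ l.1) : g i = l :: x i ∨ g i <:+ x i :=
    List.suffix_cons_iff.1 (push_of_mem hi ▸ hpush i)
  obtain ⟨k, hk⟩ := not_forall.1 hnot
  have hkl : k ∈ columns Γ l.1 := by
    by_contra hkl
    exact hk ((push_of_notMem (l := l) (x := x) hkl) ▸ hpush k)
  refine (eq_or i hi).resolve_right fun hix => ?_
  have := hix.countP_le (p := (·.1 = l.1))
  rw [hg.countP_eq hi, ← hg.countP_eq hkl, (eq_or k hkl).resolve_right hk,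
    List.countP_cons_of_pos (by simp), hx.countP_eq hkl, hx.countP_eq hi] at this
  omega

section Chain

variable {c : ℕ → Letter V}

/-- The piling of the word `c (n - 1) ⋯ c 1 c 0`. -/
noncomputable def chain (Γ : SimpleGraph V) (c : ℕ → Letter V) : ℕ → Piling V
  | 0 => fun _ => []
  | n + 1 => push Γ (c n) (chain Γ c n)

theorem isSuffix_chain {m n : ℕ} (hmn : m ≤ n) : IsSuffix (chain Γ c m) (chain Γ c n) := by
  induction n, hmn using Nat.le_induction with
  | base => exact fun i => List.suffix_rfl
  | succ n _ ih => exact ih.trans isSuffix_push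

theorem length_chain_diag_le (n k : ℕ) (v : V) :
    (chain Γ c (n + k) (v, v)).length ≤ (chain Γ c n (v, v)).length + k := by
  induction k with
  | zero => exact le_rfl
  | succ k ih =>
    have := Step.length_diag_le (Γ := Γ) (l := (c (n + k)).inv) (x := chain Γ c (n + k + 1))
      (y := chain Γ c (n + k)) (.inr (by rw [Letter.inv_inv]; rfl)) v
    rw [← add_assoc]
    omega

theorem isReduced_chain (hc : ∀ n, Γᶜ.Adj (c n).1 (c (n + 1)).1) (n : ℕ) :
    IsReduced Γ (chain Γ c n) := by
  induction n with
  | zero => exact .empty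
  | succ n ih =>
    refine ih.cons fun y hy => ?_
    cases n with
    | zero => exact push_ne_nil hy.symm
    | succ n =>
      have hne : c n ≠ (c (n + 1)).inv := fun h => (hc n).ne (congrArg (·.1) h)
      have hadj : Γ.Adj (c n).1 (c (n + 1)).1 :=
        adj_of_push_eq_push (l₂ := (c (n + 1)).inv) hne hy
      exact ((SimpleGraph.compl_adj ..).1 (hc n)).2 hadj

theorem eq_of_chain_eq_cons (hc : ∀ n, Γᶜ.Adj (c n).1 (c (n + 1)).1) {n : ℕ}
    (h : ∀ i ∈ columns Γ l.1, ∃ t, chain Γ c (n + 1) i = l :: t) : l = c n := by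
  induction n with
  | zero =>
    obtain ⟨t, ht⟩ := h _ (diag_mem_columns Γ l.1)
    by_cases hl : l.1 = (c 0).1
    · rw [hl] at ht
      exact (List.cons.inj (ht.symm.trans push_diag)).1
    · exact (List.cons_ne_nil _ _ (ht.symm.trans (push_diag_of_ne hl))).elim
  | succ n ih =>
    by_cases hadj : Γ.Adj l.1 (c (n + 1)).1
    · have hl : l = c n := ih fun i hi => by
        obtain ⟨t, ht⟩ := h i hi
        exact ⟨t, ht ▸ (push_of_notMem (notMem_columns_of_adj hadj hi)).symm⟩
      exact (((SimpleGraph.compl_adj ..).1 (hc n)).2 (hl ▸ hadj)).elim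
    · obtain ⟨hl, hcn⟩ := mem_columns_of_not_adj hadj
      obtain ⟨t, ht⟩ := h _ hl
      exact (List.cons.inj (ht.symm.trans (push_of_mem hcn))).1

theorem height_chain [Fintype V] {f : Letter V → ℤ} (n : ℕ) :
    height f (chain Γ c n) = ∑ j ∈ Finset.range n, f (c j) := by
  induction n with
  | zero => simp [height, chain]
  | succ n ih => rw [chain, height_push, ih, Finset.sum_range_succ, add_comm]

theorem le_height_chain [Fintype V] {f : Letter V → ℤ} {n : ℕ}
    (h : ∀ j < n, 1 ≤ f (c j)) : n ≤ height f (chain Γ c n) := by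
  rw [height_chain]
  simpa using Finset.card_nsmul_le_sum (Finset.range n) (fun j => f (c j)) 1
    fun j hj => h j (Finset.mem_range.1 hj)

end Chain

section Exit

/-- The first time at which the path `x` does not have `g` as a suffix, and `0` if there is none. -/
noncomputable def exitTime (g : Piling V) (x : ℕ → Piling V) : ℕ := sInf {t | ¬IsSuffix g (x t)}

variable {g h : Piling V} {x : ℕ → Piling V} {s t : ℕ}

theorem isSuffix_of_lt_exitTime (ht : t < exitTime g x) : IsSuffix g (x t) :=
  not_not.1 (Nat.notMem_of_lt_sInf ht)

theorem exitTime_le (ht : ¬IsSuffix g (x t)) : exitTime g x ≤ t := Nat.sInf_le ht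

theorem not_isSuffix_exitTime (ht : ¬IsSuffix g (x t)) : ¬IsSuffix g (x (exitTime g x)) :=
  Nat.sInf_mem (s := {t | ¬IsSuffix g (x t)}) ⟨t, ht⟩

theorem exitTime_anti (hgh : IsSuffix g h) (ht : ¬IsSuffix g (x t)) :
    exitTime h x ≤ exitTime g x :=
  exitTime_le fun hh => not_isSuffix_exitTime ht (hgh.trans hh)

theorem length_diag_le_of_path
    (hstep : ∀ t, x (t + 1) = x t ∨ ∃ l, Step Γ l (x (t + 1)) (x t)) (hst : s ≤ t) (v : V) :
    (x t (v, v)).length ≤ (x s (v, v)).length + (t - s) := by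
  induction t, hst using Nat.le_induction with
  | base => exact Nat.le_add_right _ _
  | succ t hst ih =>
    have : (x (t + 1) (v, v)).length ≤ (x t (v, v)).length + 1 := by
      rcases hstep t with h | ⟨l, h⟩
      · exact h ▸ Nat.le_succ _
      · exact h.length_diag_le v
    omega

theorem exists_exit {c : ℕ → Letter V} (hc : ∀ n, Γᶜ.Adj (c n).1 (c (n + 1)).1)
    (hred : ∀ t, IsReduced Γ (x t))
    (hstep : ∀ t, x (t + 1) = x t ∨ ∃ l, Step Γ l (x (t + 1)) (x t)) {n : ℕ}
    (hstart : IsSuffix (chain Γ c (n + 1)) (x 0))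
    (hend : ¬IsSuffix (chain Γ c (n + 1)) (x t)) :
    ∃ s, exitTime (chain Γ c (n + 1)) x = s + 1 ∧
      x s ((c n).1, (c n).1) = chain Γ c (n + 1) ((c n).1, (c n).1) := by
  have hexit := not_isSuffix_exitTime hend
  obtain ⟨s, hs⟩ : ∃ s, exitTime (chain Γ c (n + 1)) x = s + 1 :=
    Nat.exists_eq_succ_of_ne_zero fun h0 => hexit (h0 ▸ hstart)
  have hsuffix : IsSuffix (chain Γ c (n + 1)) (x s) := isSuffix_of_lt_exitTime (by omega)
  rw [hs] at hexit
  obtain ⟨l, hpush⟩ : ∃ l, x s = push Γ l (x (s + 1)) := by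
    rcases hstep s with h | ⟨l, h | h⟩
    · exact (hexit (h ▸ hsuffix)).elim
    · exact ⟨l, h⟩
    · exact (hexit (h ▸ hsuffix.trans isSuffix_push)).elim
  rw [hpush] at hsuffix
  have top {i : V × V} (hi : i ∈ columns Γ l.1) : chain Γ c (n + 1) i = l :: x (s + 1) i :=
    eq_cons_of_isSuffix_push (isReduced_chain hc (n + 1)) (hred (s + 1)) hsuffix hexit hi
  obtain rfl : l = c n := eq_of_chain_eq_cons hc fun i hi => ⟨_, top hi⟩
  exact ⟨s, hs, by rw [hpush, push_diag, top (diag_mem_columns Γ _)]⟩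

theorem height_chain_le [Fintype V] {f : Letter V → ℤ} {A m n : ℕ} {D : ℤ}
    {c : ℕ → Letter V} (hc : ∀ n, Γᶜ.Adj (c n).1 (c (n + 1)).1)
    (hwindow : ∀ v, ∃ i < m, (c (n + i)).1 = v) (hA : ∀ l, -(A : ℤ) ≤ f l)
    (hred : ∀ t, IsReduced Γ (x t))
    (hstep : ∀ t, x (t + 1) = x t ∨ ∃ l, Step Γ l (x (t + 1)) (x t))
    (hstart : IsSuffix (chain Γ c (n + m + 1)) (x 0)) (hend : x t = fun _ => [])
    (hD : ∀ t, height f (x t) ≤ D) :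
    height f (chain Γ c (n + 1)) ≤ D + Fintype.card V * (A * (m +
      (exitTime (chain Γ c (n + 1)) x - exitTime (chain Γ c (n + m + 1)) x))) := by
  have hstart' {k : ℕ} (hk : k ≤ n + m) : IsSuffix (chain Γ c (k + 1)) (x 0) :=
    (isSuffix_chain (by omega)).trans hstart
  have hend' (k : ℕ) : ¬IsSuffix (chain Γ c (k + 1)) (x t) := fun h => by
    simpa [hend, chain, push_diag] using h ((c k).1, (c k).1)
  have anti {k k' : ℕ} (hk : k ≤ k') :
      exitTime (chain Γ c (k' + 1)) x ≤ exitTime (chain Γ c (k + 1)) x :=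
    exitTime_anti (isSuffix_chain (by omega)) (hend' k)
  obtain ⟨s, hs, -⟩ := exists_exit hc hred hstep (hstart' (Nat.le_add_right n m)) (hend' n)
  have hsuffix : IsSuffix (chain Γ c (n + 1)) (x s) := isSuffix_of_lt_exitTime (by omega)
  have columns_le (v : V) : (x s (v, v)).length ≤ (chain Γ c (n + 1) (v, v)).length +
      (m + (exitTime (chain Γ c (n + 1)) x - exitTime (chain Γ c (n + m + 1)) x)) := by
    obtain ⟨i, him, rfl⟩ := hwindow v
    obtain ⟨s', hs', top⟩ := exists_exit hc hred hstep (hstart' (k := n + i) (by omega)) (hend' _)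
    have h₁ : exitTime (chain Γ c (n + i + 1)) x ≤ exitTime (chain Γ c (n + 1)) x :=
      anti (by omega)
    have h₂ : exitTime (chain Γ c (n + m + 1)) x ≤ exitTime (chain Γ c (n + i + 1)) x :=
      anti (by omega)
    have h₃ := length_diag_le_of_path hstep (show s' ≤ s by omega) (c (n + i)).1
    have h₄ := length_chain_diag_le (Γ := Γ) (c := c) (n + 1) i (c (n + i)).1
    rw [top] at h₃
    rw [add_right_comm] at h₄
    omega
  have key := height_le_height_of_isSuffix hA hsuffix columns_le
  rw [Nat.cast_add, Nat.cast_sub (anti (by omega))] at key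
  linarith [hD s]

theorem sq_le_of_path [Fintype V] {f : Letter V → ℤ} {A m n M : ℕ} {D : ℤ}
    {c : ℕ → Letter V} (hc : ∀ n, Γᶜ.Adj (c n).1 (c (n + 1)).1)
    (hwindow : ∀ n v, ∃ i < m, (c (n + i)).1 = v) (hA : ∀ l, -(A : ℤ) ≤ f l)
    (hpos : ∀ j < m * n, 1 ≤ f (c j)) (hred : ∀ t, IsReduced Γ (x t))
    (hstep : ∀ t, x (t + 1) = x t ∨ ∃ l, Step Γ l (x (t + 1)) (x t))
    (hstart : IsSuffix (chain Γ c (m * n + 1)) (x 0)) (hend : x M = fun _ => [])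
    (hD : ∀ t, height f (x t) ≤ D) :
    (n : ℤ) ^ 2 ≤ 2 * ((D + Fintype.card V * (A * m)) * n + Fintype.card V * (A * M)) := by
  obtain ⟨i, him, -⟩ := hwindow 0 (c 0).1
  let τ (k : ℕ) : ℕ := exitTime (chain Γ c (m * k + 1)) x
  have hτ : τ 0 ≤ M := exitTime_le fun h => by
    simpa [hend, chain, push_diag] using h ((c 0).1, (c 0).1)
  have window (k : ℕ) (hk : k < n) : (k : ℤ) + 1 ≤ D + Fintype.card V * (A * m) +
      (Fintype.card V * (A * τ k) - Fintype.card V * (A * τ (k + 1))) := by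
    have hkn : m * k + m ≤ m * n := by rw [← Nat.mul_succ]; exact Nat.mul_le_mul_left m hk
    have upper := height_chain_le hc (hwindow (m * k)) hA hred hstep
      ((isSuffix_chain (by omega)).trans hstart) hend hD
    have lower := le_height_chain (Γ := Γ) (f := f) (c := c) (n := m * k + 1)
      fun j hj => hpos j (by omega)
    have : (k : ℤ) ≤ m * k := by nlinarith
    push_cast at lower
    simp only [τ, Nat.mul_succ]
    linarith
  have hA₀ : 0 ≤ (Fintype.card V : ℤ) * (A * τ n) := by positivity
  have hAτ : (Fintype.card V : ℤ) * (A * τ 0) ≤ Fintype.card V * (A * M) := by gcongr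
  linarith [sq_le_of_forall_le_add_sub (T := fun k => Fintype.card V * (A * τ k)) window]

end Exit

/-! ### Paths spelled by words -/

section Word

variable (p : RAAG Γ →* Multiplicative ℤ)

/-- The exponent that `p` assigns to a letter. -/
def weight (l : Letter V) : ℤ := (p (l.val Γ)).toAdd

theorem weight_inv (l : Letter V) : weight p l.inv = -weight p l := by
  rw [weight, Letter.val_inv, map_inv, toAdd_inv, weight]

theorem abs_weight (l : Letter V) : |weight p l| = |(p (raagGen Γ l.1)).toAdd| := by
  obtain ⟨v, _ | _⟩ := l <;> simp [weight, Letter.val]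

theorem exists_letter_val_eq {g : RAAG Γ}
    (hg : g ∈ Set.range (raagGen Γ) ∨ g⁻¹ ∈ Set.range (raagGen Γ)) :
    ∃ l : Letter V, l.val Γ = g := by
  rcases hg with ⟨v, rfl⟩ | ⟨v, hv⟩
  · exact ⟨(v, true), rfl⟩
  · exact ⟨(v, false), inv_eq_iff_eq_inv.2 hv⟩

theorem val_mem_wordBall (l : Letter V) : l.val Γ ∈ wordBall (Set.range (raagGen Γ)) 1 := by
  obtain ⟨v, _ | _⟩ := l
  · exact inv_mem_wordBall (subset_wordBall_one ⟨v, rfl⟩)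
  · exact subset_wordBall_one ⟨v, rfl⟩

theorem height_ofRAAG [Fintype V] (g : RAAG Γ) :
    height (weight p) (ofRAAG g) = (p g).toAdd := by
  have step (l : Letter V) (g : RAAG Γ) (hg : height (weight p) (ofRAAG g) = (p g).toAdd) :
      height (weight p) (ofRAAG (l.val Γ * g)) = (p (l.val Γ * g)).toAdd := by
    rw [(step_ofRAAG l g).height_eq (weight_inv p), hg, map_mul, toAdd_mul, weight]
  have hg : g ∈ Subgroup.closure (Set.range (raagGen Γ)) := closure_range_raagGen ▸ trivial
  induction hg using Subgroup.closure_induction_left with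
  | one => simp [ofRAAG_one, height]
  | mul_left x hx g _ ih =>
    obtain ⟨l, rfl⟩ := exists_letter_val_eq (.inl hx)
    exact step l g ih
  | inv_mul_cancel x hx g _ ih =>
    obtain ⟨l, hl⟩ := exists_letter_val_eq (g := x⁻¹) (.inr (by rwa [inv_inv]))
    exact hl ▸ step l g ih

theorem exists_ofRAAG_eq_chain {c : ℕ → Letter V} (hc : ∀ n, Γᶜ.Adj (c n).1 (c (n + 1)).1)
    (n : ℕ) : ∃ g ∈ wordBall (Set.range (raagGen Γ)) n, ofRAAG g = chain Γ c n := by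
  induction n with
  | zero => exact ⟨1, one_mem_wordBall, ofRAAG_one⟩
  | succ n ih =>
    obtain ⟨g, hg, hgc⟩ := ih
    have hred : IsReduced Γ (push Γ (c n) (ofRAAG g)) := hgc ▸ isReduced_chain hc (n + 1)
    refine ⟨(c n).val Γ * g, ?_, by rw [ofRAAG_val_mul hred, hgc, chain]⟩
    exact Nat.add_comm 1 n ▸ mul_mem_wordBall (val_mem_wordBall (c n)) hg

theorem path_of_word {w : List (RAAG Γ)}
    (hw : ∀ g ∈ w, g ∈ Set.range (raagGen Γ) ∨ g⁻¹ ∈ Set.range (raagGen Γ)) (t : ℕ) :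
    ofRAAG (w.drop (t + 1)).prod = ofRAAG (w.drop t).prod ∨
      ∃ l, Step Γ l (ofRAAG (w.drop (t + 1)).prod) (ofRAAG (w.drop t).prod) := by
  obtain ht | ht := lt_or_ge t w.length
  · obtain ⟨l, hl⟩ := exists_letter_val_eq (hw _ (List.getElem_mem ht))
    rw [List.drop_eq_getElem_cons ht, List.prod_cons, ← hl]
    exact .inr ⟨l, step_ofRAAG l _⟩
  · rw [List.drop_of_length_le ht, List.drop_of_length_le (ht.trans t.le_succ)]
    exact .inl rfl

theorem sq_le_of_mem_wordBall [Fintype V] {T : Set (RAAG Γ)} {A K m n N M : ℕ}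
    {c : ℕ → Letter V} (hc : ∀ n, Γᶜ.Adj (c n).1 (c (n + 1)).1)
    (hwindow : ∀ n v, ∃ i < m, (c (n + i)).1 = v)
    (hA : ∀ g ∈ Set.range (raagGen Γ), |(p g).toAdd| ≤ A)
    (hpos : ∀ j < m * n, 1 ≤ weight p (c j)) (hN : m * n < N)
    (hT : T ⊆ (p.ker : Set (RAAG Γ)) ∩ wordBall (Set.range (raagGen Γ)) K)
    {g : RAAG Γ} (hgc : ofRAAG g = chain Γ c N) (hg : g ∈ wordBall T M) :
    (n : ℤ) ^ 2 ≤ 2 * ((A * K + Fintype.card V * (A * m)) * n +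
      Fintype.card V * (A * (K * M : ℕ))) := by
  obtain ⟨w, hwlen, hw, rfl, hwK⟩ := exists_word_of_mem_wordBall p hT hg
  refine sq_le_of_path (x := fun t => ofRAAG (w.drop t).prod) hc hwindow
    (fun l => (abs_le.1 ((abs_weight p l).trans_le (hA _ ⟨_, rfl⟩))).1) hpos
    (fun t => isReduced_ofRAAG _) (path_of_word hw) ?_ ?_ fun t => ?_
  · exact (isSuffix_chain hN).trans fun i => by rw [List.drop_zero, hgc]
  · rw [List.drop_of_length_le hwlen, List.prod_nil, ofRAAG_one]
  · obtain ⟨b, hb, hpb⟩ := hwK t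
    rw [height_ofRAAG, hpb]
    exact (le_abs_self _).trans (abs_toAdd_le_of_mem_wordBall p hA hb)

theorem exists_letter_one_le_weight {v : V} (hv : p (raagGen Γ v) ≠ 1) :
    ∃ l : Letter V, l.1 = v ∧ 1 ≤ weight p l := by
  have hne : weight p (v, true) ≠ 0 := by simpa [weight, Letter.val] using hv
  obtain h | h := hne.lt_or_gt
  · exact ⟨Letter.inv (v, true), rfl, by rw [weight_inv]; omega⟩
  · exact ⟨(v, true), rfl, h⟩

theorem exists_balanced_letters [Finite V] [Nontrivial V] (hconn : Γᶜ.Connected)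
    (hp : ∀ v, p (raagGen Γ v) ≠ 1) :
    ∃ m, ∀ n, ∃ c : ℕ → Letter V, (∀ j, Γᶜ.Adj (c j).1 (c (j + 1)).1) ∧
      (∀ j v, ∃ i < m, (c (j + i)).1 = v) ∧ (∀ j < m * n, 1 ≤ weight p (c j)) ∧
      ∑ j ∈ Finset.range (m * n + m * n), weight p (c j) = 0 := by
  choose a ha hpos using fun v => exists_letter_one_le_weight p (hp v)
  obtain ⟨v, m, hadj, hper, hcover⟩ := exists_periodic_covering hconn
  refine ⟨m, fun n => ?_⟩
  let c (j : ℕ) : Letter V := if j < m * n then a (v j) else (a (v j)).inv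
  have hc (j : ℕ) : (c j).1 = v j := by
    simp only [c]
    split_ifs <;> simp [ha]
  refine ⟨c, by simpa only [hc] using hadj, by simpa only [hc] using hcover, fun j hj => ?_, ?_⟩
  · simpa only [c, if_pos hj] using hpos (v j)
  · rw [Finset.sum_range_add, ← Finset.sum_add_distrib]
    refine Finset.sum_eq_zero fun j hj => ?_
    have hvj : v (m * n + j) = v j := by
      rw [add_comm, mul_comm]
      exact hper.nat_mul n j
    simp only [c, if_pos (Finset.mem_range.1 hj), if_neg (Nat.not_lt.2 (Nat.le_add_right _ j)), hvj,
      weight_inv, add_neg_cancel]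

theorem exists_mem_ker_sq_le [Finite V] [Nontrivial V] (hconn : Γᶜ.Connected)
    (hp : ∀ v, p (raagGen Γ v) ≠ 1) {T : Set (RAAG Γ)} (hT : T.Finite)
    (hTp : T ⊆ (p.ker : Set (RAAG Γ))) :
    ∃ m B : ℕ, ∀ n > 0, ∃ h ∈ p.ker, h ∈ wordBall (Set.range (raagGen Γ)) (m * n) ∧
      ∀ M, h ∈ wordBall T M → n ^ 2 ≤ B * M + B * n := by
  have := Fintype.ofFinite V
  obtain ⟨m, hm⟩ := exists_balanced_letters p hconn hp
  obtain ⟨A, hA⟩ := exists_abs_toAdd_le p (Set.finite_range (raagGen Γ))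
  obtain ⟨K, hK⟩ := exists_subset_wordBall (S := Set.range (raagGen Γ)) hT
    fun g _ => closure_range_raagGen (Γ := Γ) ▸ Subgroup.mem_top g
  set W := Fintype.card V * A
  refine ⟨m + m, 2 * (A * K + W * m + W * K), fun n hn => ?_⟩
  obtain ⟨c, hc, hwindow, hpos, hsum⟩ := hm n
  obtain ⟨i, him, -⟩ := hwindow 0 (c 0).1
  obtain ⟨h, hball, hchain⟩ := exists_ofRAAG_eq_chain hc (m * n + m * n)
  have hker : p h = 1 := by
    rw [← toAdd_eq_zero, ← height_ofRAAG p, hchain, height_chain, hsum]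
  have hmn : 0 < m * n := Nat.mul_pos (Nat.zero_lt_of_lt him) hn
  refine ⟨h, hker, add_mul m m n ▸ hball, fun M hM => ?_⟩
  have key := sq_le_of_mem_wordBall p hc hwindow hA hpos (Nat.lt_add_of_pos_left hmn)
    (Set.subset_inter hTp hK) hchain hM
  zify
  push_cast [W] at key ⊢
  have h₁ : (0 : ℤ) ≤ (A * K + Fintype.card V * A * m) * M := by positivity
  have h₂ : (0 : ℤ) ≤ Fintype.card V * A * K * n := by positivity
  linarith

end Word

end Piling
end Piling

/-! ### Distortion of the kernel -/

section Dominated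

variable {G : Type*} [Group G] {S F T : Set G} {H : Subgroup G}

theorem closure_eq_of_inter_wordBall_subset (hS : Subgroup.closure S = ⊤) (hFH : F ⊆ H)
    {b : ℕ → ℕ} (hF : ∀ r, (H : Set G) ∩ wordBall S r ⊆ wordBall F (b r)) :
    Subgroup.closure F = H := by
  refine le_antisymm ((Subgroup.closure_le H).2 hFH) fun h hH => ?_
  obtain ⟨r, hr⟩ := (eventually_mem_wordBall (S := S) (hS ▸ Subgroup.mem_top h)).exists
  exact wordBall_subset_closure (hF r ⟨hH, hr⟩)

theorem distortion_dominated_sq (hS : Subgroup.closure S = ⊤) (hT : Subgroup.closure T = H)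
    (hF : F.Finite) (hFH : F ⊆ H) {C : ℕ}
    (hC : ∀ r, (H : Set G) ∩ wordBall S r ⊆ wordBall F (C * (r + 1) ^ 2)) :
    Dominated (distortion S T H) fun n => n ^ 2 := by
  obtain ⟨K, hK⟩ := exists_subset_wordBall (S := T) hF (hT ▸ hFH)
  refine ⟨4 * K * C + 1, 1, 1, 0, Nat.succ_pos _, one_pos, one_pos, fun r hr => ?_⟩
  have bound : distortion S T H r ≤ K * (C * (r + 1) ^ 2) :=
    distortion_le hS hT fun h hH hr => wordBall_subset_wordBall hK _ (hC r ⟨hH, hr⟩)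
  calc distortion S T H r ≤ K * (C * (r + 1) ^ 2) := bound
    _ ≤ K * (C * (2 * r) ^ 2) := by gcongr; omega
    _ = 4 * K * C * r ^ 2 := by ring
    _ ≤ (4 * K * C + 1) * (1 * r) ^ 2 + 1 * r := by nlinarith

theorem sq_dominated_distortion (hfin : S.Finite) (hS : Subgroup.closure S = ⊤)
    (hT : Subgroup.closure T = H) {m B : ℕ}
    (hsq : ∀ n > 0, ∃ h ∈ H, h ∈ wordBall S (m * n) ∧
      ∀ M, h ∈ wordBall T M → n ^ 2 ≤ B * M + B * n) :
    Dominated (fun n => n ^ 2) (distortion S T H) := by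
  refine ⟨B + 1, m + 1, B + 1, 0, B.succ_pos, m.succ_pos, B.succ_pos, fun n hn => ?_⟩
  obtain ⟨h, hH, hball, hlower⟩ := hsq n hn
  have hdist := wordLength_le_distortion (T := T) hfin hS hH
    (wordBall_mono_right (Nat.mul_le_mul_right n m.le_succ) hball)
  calc n ^ 2 ≤ B * wordLength T h + B * n := hlower _ ((wordLength_le_iff (hT ▸ hH)).1 le_rfl)
    _ ≤ (B + 1) * distortion S T H ((m + 1) * n) + (B + 1) * n := by gcongr <;> omega

end Dominated

theorem stmt5 {V : Type*} [Fintype V] (Γ : SimpleGraph V)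
    (hconn : Γ.Connected) (hcard : 2 ≤ Fintype.card V) (hjoin : ¬ IsJoin Γ)
    (p : RAAG Γ →* Multiplicative ℤ)
    (hp : ∀ v : V, p (raagGen Γ v) ≠ 1) :
    Subgroup.FG p.ker ∧
    ∀ T : Set (RAAG Γ), T.Finite → T ⊆ (p.ker : Set (RAAG Γ)) →
      Subgroup.closure T = p.ker →
      FEquiv (distortion (Set.range (raagGen Γ)) T p.ker) (fun n => n ^ 2) := by
  have : Nontrivial V := Fintype.one_lt_card_iff_nontrivial.1 hcard
  have gen := closure_range_raagGen (Γ := Γ)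
  obtain ⟨F, hF, hFp, C, hC⟩ :=
    ker_inter_wordBall_subset hconn gen (fun _ _ => commute_raagGen) p hp
  refine ⟨(Subgroup.fg_iff _).2 ⟨F, closure_eq_of_inter_wordBall_subset gen hFp hC, hF⟩,
    fun T hT hTp hTgen => ⟨distortion_dominated_sq gen hTgen hF hFp hC, ?_⟩⟩
  have hcompl : Γᶜ.Connected := ⟨preconnected_compl_of_not_isJoin hjoin⟩
  obtain ⟨m, B, hB⟩ := Piling.exists_mem_ker_sq_le p hcompl hp hT hTp
  exact sq_dominated_distortion (Set.finite_range _) gen hTgen hB
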